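/- arXiv:1410.1232 — 2 statements merged into one kernel-verified Lean document; each statement's English description precedes it below -/
import Mathlib

section
/- For all natural numbers i ≠ j, the matrix polynomials P_i and P_j are orthogonal with respect to the weight W_{p,n}: ∫_{-1}^{1} P_i(x) W_{p,n}(x) P_j(x)^T dx = 0 (the 2×2 zero matrix). -/
open Matrix

/-- Pochhammer symbol `(a)_k = a (a+1) ⋯ (a+k-1)`. -/
noncomputable def poch (a : ℝ) (k : ℕ) : ℝ := ∏ i ∈ Finset.range k, (a + i)

/-- Gegenbauer polynomial `C_w^λ(x)`, with the convention `C_w^λ = 0` for `w < 0`. -/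
noncomputable def geg (l : ℝ) (w : ℤ) (x : ℝ) : ℝ :=
  if w < 0 then 0 else
    poch (2 * l) w.toNat / (w.toNat.factorial : ℝ) *
      ∑ k ∈ Finset.range (w.toNat + 1),
        (poch (-(w.toNat : ℝ)) k * poch ((w.toNat : ℝ) + 2 * l) k) /
            (poch (l + 1 / 2) k * (k.factorial : ℝ)) * ((1 - x) / 2) ^ k

/-- The weight matrix `W_{p,n}(x)`. -/
noncomputable def Wmat (n : ℕ) (p : ℝ) (x : ℝ) : Matrix (Fin 2) (Fin 2) ℝ :=
  (1 - x ^ 2) ^ ((n : ℝ) / 2 - 1) •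
    !![p * x ^ 2 + (n : ℝ) - p, -(n : ℝ) * x; -(n : ℝ) * x, ((n : ℝ) - p) * x ^ 2 + p]

/-- The matrix valued polynomial `P_w`. -/
noncomputable def Pmat (n : ℕ) (p : ℝ) (w : ℕ) (x : ℝ) : Matrix (Fin 2) (Fin 2) ℝ :=
  !![1 / ((n : ℝ) + 1) * geg (((n : ℝ) + 1) / 2) (w : ℤ) x +
        1 / (p + w) * geg (((n : ℝ) + 3) / 2) ((w : ℤ) - 2) x,
      1 / (p + w) * geg (((n : ℝ) + 3) / 2) ((w : ℤ) - 1) x;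
      1 / ((n : ℝ) - p + w) * geg (((n : ℝ) + 3) / 2) ((w : ℤ) - 1) x,
      1 / ((n : ℝ) + 1) * geg (((n : ℝ) + 1) / 2) (w : ℤ) x +
        1 / ((n : ℝ) - p + w) * geg (((n : ℝ) + 3) / 2) ((w : ℤ) - 2) x]

open Polynomial intervalIntegral

/-!
Put `q = n - p` and `f_w = C_w^l / (2 l)` with `l = (n + 1) / 2`, so that `f_w' = C_{w-1}^{l+1}`.
By the contiguity relation `C_{w-2}^{l+1} = x f_w' - w f_w`, the matrix `P_w` is a constant diagonal
matrix times `M(f_w) = [[p f_w + x f_w', f_w'], [f_w', q f_w + x f_w']]`. Expanding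
`M(f_i) W M(f_j)ᵀ`, the mixed terms `f_i' f_j + f_i f_j'` assemble into total derivatives of
functions vanishing at `±1`, and what remains are multiples of `(1 - x²)^(n/2) f_i f_j` and
`(1 - x²)^(n/2+1) f_i' f_j'`. Both integrate to zero by the classical orthogonality of the
Gegenbauer polynomials with parameters `l` and `l + 1`, which holds because `(1 - x²)^(l+1/2)` times
the Wronskian of `C_i^l` and `C_j^l` is a primitive of a nonzero multiple of
`(1 - x²)^(l-1/2) C_i^l C_j^l`.
-/

section Pochhammer

lemma poch_eq_eval_ascPochhammer (a : ℝ) (k : ℕ) : poch a k = (ascPochhammer ℝ k).eval a := by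
  induction k with
  | zero => simp [poch]
  | succ k ih => rw [ascPochhammer_succ_eval, ← ih, poch, Finset.prod_range_succ, ← poch]

lemma poch_succ (a : ℝ) (k : ℕ) : poch a (k + 1) = poch a k * (a + k) :=
  Finset.prod_range_succ _ _

lemma poch_succ_left (a : ℝ) (k : ℕ) : poch a (k + 1) = a * poch (a + 1) k := by
  simp only [poch_eq_eval_ascPochhammer, ascPochhammer_succ_left, eval_mul, eval_X, eval_comp,
    eval_add, eval_one]

lemma poch_pos {a : ℝ} (ha : 0 < a) (k : ℕ) : 0 < poch a k :=
  poch_eq_eval_ascPochhammer a k ▸ ascPochhammer_pos k a ha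

lemma poch_neg_natCast_of_lt {w k : ℕ} (h : w < k) : poch (-w) k = 0 :=
  poch_eq_eval_ascPochhammer _ k ▸ ascPochhammer_eval_neg_coe_nat_of_lt h

end Pochhammer

section Coefficients

/-- The coefficient of `((1 - x) / 2) ^ k` in the Gegenbauer polynomial `C_w^l(x)`. -/
noncomputable def gegenbauerCoeff (l : ℝ) (w k : ℕ) : ℝ :=
  poch (2 * l) w / w.factorial *
    ((poch (-w) k * poch (w + 2 * l) k) / (poch (l + 1 / 2) k * k.factorial))

lemma gegenbauerCoeff_eq_zero_of_lt (l : ℝ) {w k : ℕ} (h : w < k) :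
    gegenbauerCoeff l w k = 0 := by
  simp [gegenbauerCoeff, poch_neg_natCast_of_lt h]

lemma gegenbauerCoeff_succ_right {l : ℝ} (hl : -1 / 2 < l) (w k : ℕ) :
    gegenbauerCoeff l w (k + 1) * ((k + 1) * (l + 1 / 2 + k)) =
      gegenbauerCoeff l w k * ((k - w) * (w + 2 * l + k)) := by
  have hl' : 0 < l + 1 / 2 := by linarith
  have hpoch := poch_pos hl' k
  have hlk : 0 < l + 1 / 2 + k := by positivity
  simp only [gegenbauerCoeff, poch_succ, Nat.factorial_succ]
  push_cast
  generalize poch (l + 1 / 2) k = d at *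
  generalize l + 1 / 2 + (k : ℝ) = m at *
  field_simp
  ring

lemma gegenbauerCoeff_succ_left (l : ℝ) (w k : ℕ) :
    gegenbauerCoeff l (w + 1) k * (w + 1 - k) = gegenbauerCoeff l w k * (w + 2 * l + k) := by
  have shift (a : ℝ) : a * poch (a + 1) k = poch a k * (a + k) := by
    rw [← poch_succ_left, poch_succ]
  have hneg : poch (-(w + 1)) k * (w + 1 - k) = (w + 1) * poch (-w) k := by
    have := shift (-(w + 1))
    rw [show -((w : ℝ) + 1) + 1 = -w by ring] at this
    linear_combination this
  have hadd : (2 * l + w) * poch (w + 1 + 2 * l) k = poch (w + 2 * l) k * (w + 2 * l + k) := by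
    rw [← shift]
    ring_nf
  simp only [gegenbauerCoeff, poch_succ, Nat.factorial_succ]
  push_cast
  generalize poch (l + 1 / 2) k = d
  calc _ = poch (2 * l) w / ((w + 1) * w.factorial) *
        ((poch (-(w + 1)) k * (w + 1 - k)) * ((2 * l + w) * poch (w + 1 + 2 * l) k) /
          (d * k.factorial)) := by ring
    _ = _ := by
      rw [hneg, hadd]
      field_simp

lemma succ_mul_gegenbauerCoeff_succ_succ {l : ℝ} (hl : -1 / 2 < l) (w k : ℕ) :
    (k + 1) * gegenbauerCoeff l (w + 1) (k + 1) = -(4 * l) * gegenbauerCoeff (l + 1) w k := by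
  have hl' : 0 < l + 1 / 2 := by linarith
  have hpoch := poch_pos (show 0 < l + 1 + 1 / 2 by linarith) k
  have htop : poch (2 * l) (w + 1) * (w + 1 + 2 * l) =
      4 * l * ((l + 1 / 2) * poch (2 * (l + 1)) w) := by
    have := poch_succ (2 * l) (w + 1)
    rw [poch_succ_left, poch_succ_left] at this
    rw [show 2 * (l + 1) = 2 * l + 1 + 1 by ring]
    push_cast at this
    linear_combination -this
  have hneg : poch (-(w + 1)) (k + 1) = -(w + 1) * poch (-w) k := by
    rw [poch_succ_left]
    ring_nf
  have hadd : poch (w + 1 + 2 * l) (k + 1) =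
      (w + 1 + 2 * l) * poch (w + 2 * (l + 1)) k := by
    rw [poch_succ_left]
    ring_nf
  have hhalf : poch (l + 1 / 2) (k + 1) = (l + 1 / 2) * poch (l + 1 + 1 / 2) k := by
    rw [poch_succ_left]
    ring_nf
  simp only [gegenbauerCoeff, Nat.factorial_succ]
  push_cast
  rw [hneg, hadd, hhalf]
  generalize poch (l + 1 + 1 / 2) k = d at *
  generalize l + 1 / 2 = m at *
  field_simp
  linear_combination - poch (-w) k * poch (w + 2 * (l + 1)) k * htop

lemma gegenbauerCoeff_sub_succ_left {l : ℝ} (hl : -1 / 2 < l) (w k : ℕ) :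
    (w + 1 - k) * gegenbauerCoeff l (w + 1) k =
      (k + 1) / 2 * (gegenbauerCoeff l w (k + 1) - gegenbauerCoeff l (w + 1) (k + 1)) := by
  have hpos : 0 < w + 1 + 2 * l + k := by
    have : (0 : ℝ) ≤ w + k := by positivity
    linarith
  have hright := gegenbauerCoeff_succ_right hl (w + 1) k
  have hleft := gegenbauerCoeff_succ_left l w (k + 1)
  push_cast at hright hleft
  apply mul_right_cancel₀ hpos.ne'
  linear_combination (k + 1) / 2 * hleft + hright

end Coefficients

section ShiftedGegenbauer

/-- The Gegenbauer polynomial `C_w^l` in the variable `t = (1 - x) / 2`, in which its coefficients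
are hypergeometric terms. -/
noncomputable def shiftedGegenbauer (l : ℝ) (w : ℕ) : ℝ[X] :=
  ∑ k ∈ Finset.range (w + 1), monomial k (gegenbauerCoeff l w k)

lemma coeff_shiftedGegenbauer (l : ℝ) (w k : ℕ) :
    (shiftedGegenbauer l w).coeff k = gegenbauerCoeff l w k := by
  simp only [shiftedGegenbauer, finsetSum_coeff, coeff_monomial, Finset.sum_ite_eq',
    Finset.mem_range, Order.lt_add_one_iff, ite_eq_left_iff, not_le]
  exact fun h => (gegenbauerCoeff_eq_zero_of_lt l h).symm

lemma derivative_shiftedGegenbauer_zero (l : ℝ) : derivative (shiftedGegenbauer l 0) = 0 := by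
  simp [shiftedGegenbauer]

variable {l : ℝ} (hl : -1 / 2 < l) (w : ℕ)
include hl

lemma derivative_shiftedGegenbauer_succ :
    derivative (shiftedGegenbauer l (w + 1)) = C (-(4 * l)) * shiftedGegenbauer (l + 1) w := by
  ext k
  rw [coeff_derivative, coeff_C_mul, coeff_shiftedGegenbauer, coeff_shiftedGegenbauer, mul_comm,
    succ_mul_gegenbauerCoeff_succ_succ hl]

lemma shiftedGegenbauer_ode :
    X * (1 - X) * derivative (derivative (shiftedGegenbauer l w))
      + (C (l + 1 / 2) - C (2 * l + 1) * X) * derivative (shiftedGegenbauer l w)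
      + C (w * (w + 2 * l)) * shiftedGegenbauer l w = 0 := by
  ext k
  have hrec := gegenbauerCoeff_succ_right hl w k
  simp only [mul_sub, sub_mul, mul_one, mul_assoc]
  rcases k with _ | _ | k <;>
  · simp only [coeff_add, coeff_sub, coeff_C_mul, coeff_derivative, coeff_shiftedGegenbauer,
      coeff_X_mul_zero, coeff_X_mul, coeff_zero]
    push_cast at *
    linear_combination hrec

lemma shiftedGegenbauer_contiguous :
    (X - C (1 / 2)) * derivative (shiftedGegenbauer l (w + 1))
      + C (1 / 2) * derivative (shiftedGegenbauer l w) =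
      C (w + 1 : ℝ) * shiftedGegenbauer l (w + 1) := by
  ext k
  have h := gegenbauerCoeff_sub_succ_left hl w k
  simp only [sub_mul]
  rcases k with _ | k <;>
  · simp only [coeff_add, coeff_sub, coeff_C_mul, coeff_derivative, coeff_shiftedGegenbauer,
      coeff_X_mul_zero, coeff_X_mul]
    push_cast at *
    linear_combination -h

end ShiftedGegenbauer

section Gegenbauer

/-- The Gegenbauer polynomial `C_w^l` as an element of `ℝ[X]`; it vanishes for `w < 0`, so that
the derivative and the contiguity relation hold for every integer index. -/
noncomputable def gegenbauer (l : ℝ) : ℤ → ℝ[X]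
  | (w : ℕ) => (shiftedGegenbauer l w).comp (C (1 / 2) * (1 - X))
  | Int.negSucc _ => 0

lemma eval_gegenbauer (l : ℝ) (w : ℤ) (x : ℝ) : (gegenbauer l w).eval x = geg l w x := by
  rcases w with w | w
  · simp only [gegenbauer, geg, shiftedGegenbauer, gegenbauerCoeff, eval_comp, eval_finsetSum,
      eval_monomial, eval_mul, eval_sub, eval_C, eval_X, eval_one, Finset.mul_sum]
    simp [mul_assoc, div_eq_inv_mul]
  · simp [gegenbauer, geg]

lemma gegenbauer_natCast (l : ℝ) (w : ℕ) :
    gegenbauer l w = (shiftedGegenbauer l w).comp (C (1 / 2) * (1 - X)) := rfl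

lemma gegenbauer_of_neg (l : ℝ) {w : ℤ} (hw : w < 0) : gegenbauer l w = 0 := by
  obtain ⟨v, rfl⟩ := Int.eq_negSucc_of_lt_zero hw
  rfl

lemma derivative_comp_half_one_sub (f : ℝ[X]) :
    derivative (f.comp (C (1 / 2) * (1 - X))) =
      C (-(1 / 2)) * (derivative f).comp (C (1 / 2) * (1 - X)) := by
  simp [derivative_comp]

lemma derivative_gegenbauer_zero (l : ℝ) : derivative (gegenbauer l 0) = 0 := by
  rw [← Nat.cast_zero, gegenbauer_natCast, derivative_comp_half_one_sub,
    derivative_shiftedGegenbauer_zero, zero_comp, mul_zero]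

variable {l : ℝ} (hl : -1 / 2 < l) (w : ℤ)
include hl

lemma derivative_gegenbauer :
    derivative (gegenbauer l w) = C (2 * l) * gegenbauer (l + 1) (w - 1) := by
  rcases lt_trichotomy w 0 with hw | rfl | hw
  · simp [gegenbauer_of_neg _ hw, gegenbauer_of_neg _ (show w - 1 < 0 by lia)]
  · rw [derivative_gegenbauer_zero, gegenbauer_of_neg _ (by lia), mul_zero]
  · obtain ⟨v, rfl⟩ : ∃ v : ℕ, w = (v + 1 : ℕ) := ⟨(w - 1).toNat, by lia⟩
    rw [Nat.cast_succ, add_sub_cancel_right, ← Nat.cast_succ, gegenbauer_natCast,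
      gegenbauer_natCast, derivative_comp_half_one_sub, derivative_shiftedGegenbauer_succ hl,
      mul_comp, C_comp, ← mul_assoc, ← C_mul]
    ring_nf

lemma gegenbauer_contiguous :
    X * derivative (gegenbauer l w) - derivative (gegenbauer l (w - 1)) =
      C (w : ℝ) * gegenbauer l w := by
  rcases lt_trichotomy w 0 with hw | rfl | hw
  · simp [gegenbauer_of_neg _ hw, gegenbauer_of_neg _ (show w - 1 < 0 by lia)]
  · rw [derivative_gegenbauer_zero, gegenbauer_of_neg _ (show (0 - 1 : ℤ) < 0 by lia)]
    simp
  · obtain ⟨v, rfl⟩ : ∃ v : ℕ, w = (v + 1 : ℕ) := ⟨(w - 1).toNat, by lia⟩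
    have h := congrArg (comp · (C (1 / 2) * (1 - X))) (shiftedGegenbauer_contiguous hl v)
    rw [Nat.cast_succ, add_sub_cancel_right, ← Nat.cast_succ]
    simp only [gegenbauer_natCast, derivative_comp_half_one_sub, add_comp, mul_comp, sub_comp,
      X_comp, C_comp, C_neg] at h ⊢
    push_cast
    linear_combination h

lemma gegenbauer_ode :
    (1 - X ^ 2) * derivative (derivative (gegenbauer l w))
      - C (2 * l + 1) * X * derivative (gegenbauer l w) =
      C (-(w * (w + 2 * l))) * gegenbauer l w := by
  rcases lt_or_ge w 0 with hw | hw
  · simp [gegenbauer_of_neg _ hw]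
  · lift w to ℕ using hw
    have h := congrArg (comp · (C (1 / 2) * (1 - X))) (shiftedGegenbauer_ode hl w)
    have half : (2 : ℝ[X]) * C (1 / 2) = 1 := by
      rw [← C_ofNat, ← C_mul]
      norm_num
    simp only [gegenbauer_natCast, derivative_comp_half_one_sub, derivative_C_mul, derivative_neg,
      neg_mul, add_comp, mul_comp, sub_comp, X_comp, C_comp, one_comp, zero_comp, C_neg, C_mul,
      C_add] at h ⊢
    simp only [C_1, C_ofNat] at *
    generalize (derivative (derivative (shiftedGegenbauer l w))).comp _ = f'' at h ⊢
    generalize (derivative (shiftedGegenbauer l w)).comp _ = f' at h ⊢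
    push_cast
    linear_combination h + ((1 - X) * C (1 / 2) * f'' + C l * f') * half

end Gegenbauer

section UltrasphericalIntegral

open MeasureTheory

lemma intervalIntegrable_one_sub_sq_rpow {s : ℝ} (hs : -1 < s) :
    IntervalIntegrable (fun x : ℝ => (1 - x ^ 2) ^ s) volume (-1) 1 := by
  have right : IntervalIntegrable (fun x : ℝ => (1 - x ^ 2) ^ s) volume 0 1 := by
    have hsing : IntervalIntegrable (fun x : ℝ => (1 - x) ^ s) volume 0 1 := by
      simpa using ((intervalIntegrable_rpow' (a := 0) (b := 1) hs).comp_sub_left 1).symm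
    have hcont : ContinuousOn (fun x : ℝ => (1 + x) ^ s) (Set.uIcc 0 1) := by
      refine ContinuousOn.rpow_const (by fun_prop) fun x hx => Or.inl ?_
      rw [Set.uIcc_of_le zero_le_one] at hx
      linarith [hx.1]
    refine (hsing.mul_continuousOn hcont).congr fun x hx => ?_
    rw [Set.uIoc_of_le zero_le_one] at hx
    rw [← Real.mul_rpow (by linarith [hx.2]) (by linarith [hx.1])]
    ring_nf
  have left : IntervalIntegrable (fun x : ℝ => (1 - x ^ 2) ^ s) volume (-1) 0 := by
    simpa using right.symm.comp_sub_left 0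
  exact left.trans right

lemma intervalIntegrable_one_sub_sq_rpow_mul_eval {s : ℝ} (hs : -1 < s) (f : ℝ[X]) :
    IntervalIntegrable (fun x => (1 - x ^ 2) ^ s * f.eval x) volume (-1) 1 :=
  (intervalIntegrable_one_sub_sq_rpow hs).mul_continuousOn f.continuous.continuousOn

/-- The moment functional `f ↦ ∫_{-1}^{1} (1 - x²)^s f(x) dx` of the ultraspherical weight. -/
noncomputable def ultrasphericalIntegral (s : ℝ) (f : ℝ[X]) : ℝ :=
  ∫ x in (-1 : ℝ)..1, (1 - x ^ 2) ^ s * f.eval x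

/-- The operator `D_s` with `d/dx ((1 - x²)^(s+1) f(x)) = (1 - x²)^s (D_s f)(x)`, by which
total derivatives are written against the weight `(1 - x²)^s`. -/
noncomputable def ultrasphericalDeriv (s : ℝ) (f : ℝ[X]) : ℝ[X] :=
  (1 - X ^ 2) * derivative f - C (2 * (s + 1)) * X * f

lemma hasDerivAt_one_sub_sq_rpow_mul_eval (s : ℝ) (f : ℝ[X]) {x : ℝ} (hx : 0 < 1 - x ^ 2) :
    HasDerivAt (fun x => (1 - x ^ 2) ^ (s + 1) * f.eval x)
      ((1 - x ^ 2) ^ s * (ultrasphericalDeriv s f).eval x) x := by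
  have hbase : HasDerivAt (fun x : ℝ => 1 - x ^ 2) (-(2 * x)) x := by
    simpa using (hasDerivAt_pow 2 x).const_sub 1
  refine ((hbase.rpow_const (p := s + 1) (Or.inl hx.ne')).mul (f.hasDerivAt x)).congr_deriv ?_
  rw [add_sub_cancel_right, Real.rpow_add_one hx.ne']
  simp only [ultrasphericalDeriv, eval_sub, eval_mul, eval_one, eval_pow, eval_X, eval_C]
  ring

variable {s : ℝ} (hs : -1 < s)
include hs

lemma ultrasphericalIntegral_add (f g : ℝ[X]) :
    ultrasphericalIntegral s (f + g) =
      ultrasphericalIntegral s f + ultrasphericalIntegral s g := by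
  simp only [ultrasphericalIntegral, eval_add, mul_add]
  exact integral_add (intervalIntegrable_one_sub_sq_rpow_mul_eval hs f)
    (intervalIntegrable_one_sub_sq_rpow_mul_eval hs g)

omit hs in
lemma ultrasphericalIntegral_C_mul (c : ℝ) (f : ℝ[X]) :
    ultrasphericalIntegral s (C c * f) = c * ultrasphericalIntegral s f := by
  simp only [ultrasphericalIntegral, eval_mul, eval_C, mul_left_comm _ c,
    intervalIntegral.integral_const_mul]

lemma ultrasphericalIntegral_one_sub_sq_mul (f : ℝ[X]) :
    ultrasphericalIntegral s ((1 - X ^ 2) * f) = ultrasphericalIntegral (s + 1) f := by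
  refine integral_congr fun x hx => ?_
  rw [Set.uIcc_of_le (by norm_num)] at hx
  have hx0 : 0 ≤ 1 - x ^ 2 := by nlinarith [hx.1, hx.2]
  simp only [Real.rpow_add_one' hx0 (show s + 1 ≠ 0 by linarith), eval_mul, eval_sub, eval_one,
    eval_pow, eval_X]
  ring

lemma ultrasphericalIntegral_ultrasphericalDeriv (f : ℝ[X]) :
    ultrasphericalIntegral s (ultrasphericalDeriv s f) = 0 := by
  have hs0 : s + 1 ≠ 0 := by linarith
  have hcont : Continuous fun x : ℝ => (1 - x ^ 2) ^ (s + 1) * f.eval x :=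
    (Continuous.rpow_const (by fun_prop) fun x => Or.inr (by linarith)).mul f.continuous
  rw [ultrasphericalIntegral, integral_eq_sub_of_hasDerivAt_of_le (by norm_num) hcont.continuousOn
    (fun x hx => hasDerivAt_one_sub_sq_rpow_mul_eval s f (by nlinarith [hx.1, hx.2]))
    (intervalIntegrable_one_sub_sq_rpow_mul_eval hs _)]
  simp [Real.zero_rpow hs0]

end UltrasphericalIntegral

section Orthogonality

theorem ultrasphericalIntegral_gegenbauer_mul_gegenbauer {l : ℝ} (hl : -1 / 2 < l) {i j : ℤ}
    (hij : i ≠ j) :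
    ultrasphericalIntegral (l - 1 / 2) (gegenbauer l i * gegenbauer l j) = 0 := by
  rcases lt_or_ge i 0 with hi | hi
  · simp [gegenbauer_of_neg l hi, ultrasphericalIntegral]
  rcases lt_or_ge j 0 with hj | hj
  · simp [gegenbauer_of_neg l hj, ultrasphericalIntegral]
  set F := gegenbauer l i
  set G := gegenbauer l j
  have wronskian : ultrasphericalDeriv (l - 1 / 2) (derivative F * G - F * derivative G) =
      C ((j - i) * (i + j + 2 * l)) * (F * G) := by
    have hF : _ = _ * F := gegenbauer_ode hl i
    have hG : _ = _ * G := gegenbauer_ode hl j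
    simp only [ultrasphericalDeriv, derivative_sub, derivative_mul,
      show 2 * (l - 1 / 2 + 1) = 2 * l + 1 by ring, C_mul, C_add, C_sub, C_neg] at hF hG ⊢
    linear_combination G * hF - F * hG
  have heigenvalue : ((j : ℝ) - i) * (i + j + 2 * l) ≠ 0 := by
    have : (1 : ℝ) ≤ i + j := by exact_mod_cast (by lia : 1 ≤ i + j)
    refine mul_ne_zero (sub_ne_zero.2 (by exact_mod_cast hij.symm)) (by linarith)
  have := ultrasphericalIntegral_ultrasphericalDeriv (s := l - 1 / 2) (by linarith)
    (derivative F * G - F * derivative G)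
  rw [wronskian, ultrasphericalIntegral_C_mul] at this
  exact (mul_eq_zero.1 this).resolve_left heigenvalue

end Orthogonality

section MatrixIdentity

/-- The matrix `M(f)` for which `P_w = diag(1/(p+w), 1/(q+w)) M(f)`, where `q = n - p` and `f` is
the normalized Gegenbauer polynomial of degree `w`. -/
noncomputable def jetMatrix (p q : ℝ) (f : ℝ[X]) : Matrix (Fin 2) (Fin 2) ℝ[X] :=
  !![C p * f + X * derivative f, derivative f; derivative f, C q * f + X * derivative f]

/-- The polynomial factor of the weight matrix `W_{p,n}`, with `q = n - p`. -/
noncomputable def weightFactor (p q : ℝ) : Matrix (Fin 2) (Fin 2) ℝ[X] :=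
  !![C p * X ^ 2 + C q, -C (p + q) * X; -C (p + q) * X, C q * X ^ 2 + C p]

lemma jetMatrix_mul_weightFactor_mul_transpose {p q s : ℝ} (hs : 2 * (s + 1) = p + q)
    (f g : ℝ[X]) :
    jetMatrix p q f * weightFactor p q * (jetMatrix p q g)ᵀ =
      !![C (-p ^ 2) * ultrasphericalDeriv s (X * (f * g))
            + C (p ^ 2 * (q + 1)) * ((1 - X ^ 2) * (f * g))
            + C p * ((1 - X ^ 2) * ((1 - X ^ 2) * (derivative f * derivative g))),
          C (p * q) * ultrasphericalDeriv s (f * g);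
          C (p * q) * ultrasphericalDeriv s (f * g),
          C (-q ^ 2) * ultrasphericalDeriv s (X * (f * g))
            + C (q ^ 2 * (p + 1)) * ((1 - X ^ 2) * (f * g))
            + C q * ((1 - X ^ 2) * ((1 - X ^ 2) * (derivative f * derivative g)))] := by
  ext1 a b
  fin_cases a <;> fin_cases b <;>
  · simp only [jetMatrix, weightFactor, ultrasphericalDeriv, hs, mul_apply, Fin.sum_univ_two,
      transpose_apply, of_apply, cons_val', cons_val_fin_one, cons_val_zero, cons_val_one,
      Fin.zero_eta, Fin.mk_one, derivative_mul, derivative_X, C_mul, C_add, C_neg, C_pow, C_1]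
    ring

lemma ultrasphericalIntegral_jetMatrix_apply {p q s : ℝ} (hs : -1 < s) (hpq : 2 * (s + 1) = p + q)
    {f g : ℝ[X]} (hfg : ultrasphericalIntegral (s + 1) (f * g) = 0)
    (hfg' : ultrasphericalIntegral (s + 1 + 1) (derivative f * derivative g) = 0) (a b : Fin 2) :
    ultrasphericalIntegral s ((jetMatrix p q f * weightFactor p q * (jetMatrix p q g)ᵀ) a b) =
      0 := by
  rw [jetMatrix_mul_weightFactor_mul_transpose hpq]
  have hs' : -1 < s + 1 := by linarith
  fin_cases a <;> fin_cases b <;>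
  simp [ultrasphericalIntegral_add hs, ultrasphericalIntegral_C_mul,
    ultrasphericalIntegral_one_sub_sq_mul hs, ultrasphericalIntegral_one_sub_sq_mul hs',
    ultrasphericalIntegral_ultrasphericalDeriv hs, hfg, hfg', -map_neg, -map_mul]

end MatrixIdentity

section MatrixOrthogonality

/-- The normalization `C_w^l / (2 l)` of the Gegenbauer polynomial, whose derivative is
`C_{w-1}^{l+1}`. -/
noncomputable def normalizedGegenbauer (l : ℝ) (w : ℤ) : ℝ[X] :=
  C (1 / (2 * l)) * gegenbauer l w

lemma derivative_normalizedGegenbauer {l : ℝ} (hl : 0 < l) (w : ℤ) :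
    derivative (normalizedGegenbauer l w) = gegenbauer (l + 1) (w - 1) := by
  rw [normalizedGegenbauer, derivative_C_mul, derivative_gegenbauer (by linarith), ← mul_assoc,
    ← C_mul, one_div_mul_cancel (by positivity), C_1, one_mul]

lemma normalizedGegenbauer_contiguous {l : ℝ} (hl : 0 < l) (w : ℤ) :
    gegenbauer (l + 1) (w - 2) =
      X * derivative (normalizedGegenbauer l w) - C (w : ℝ) * normalizedGegenbauer l w := by
  have hprev := derivative_normalizedGegenbauer hl (w - 1)
  rw [sub_sub, one_add_one_eq_two, normalizedGegenbauer, derivative_C_mul] at hprev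
  rw [normalizedGegenbauer, derivative_C_mul, ← hprev]
  linear_combination -C (1 / (2 * l)) * gegenbauer_contiguous (show -1 / 2 < l by linarith) w

variable {n : ℕ} {p : ℝ}

lemma Wmat_eq_smul_map_weightFactor (n : ℕ) (p x : ℝ) :
    Wmat n p x =
      (1 - x ^ 2) ^ ((n : ℝ) / 2 - 1) • (evalRingHom x).mapMatrix (weightFactor p (n - p)) := by
  ext a b
  fin_cases a <;> fin_cases b <;> simp [Wmat, weightFactor, add_sub_assoc]

lemma Pmat_eq_diagonal_mul_map_jetMatrix {w : ℕ} (hp : p + w ≠ 0) (hq : n - p + w ≠ 0) (x : ℝ) :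
    Pmat n p w x = diagonal ![1 / (p + w), 1 / (n - p + w)] *
      (evalRingHom x).mapMatrix (jetMatrix p (n - p) (normalizedGegenbauer ((n + 1) / 2) w)) := by
  have hl : (0 : ℝ) < (n + 1) / 2 := by positivity
  set f := normalizedGegenbauer ((n + 1) / 2) w with hf
  have hl' : ((n : ℝ) + 3) / 2 = (n + 1) / 2 + 1 := by ring
  have hgeg : 1 / ((n : ℝ) + 1) * geg ((n + 1) / 2) w x = f.eval x := by
    rw [hf, normalizedGegenbauer, eval_mul, eval_C, eval_gegenbauer, mul_div_cancel₀ _ two_ne_zero]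
  have hgeg₁ : geg ((n + 3) / 2) (w - 1) x = (derivative f).eval x := by
    rw [derivative_normalizedGegenbauer hl, eval_gegenbauer, hl']
  have hgeg₂ : geg ((n + 3) / 2) (w - 2) x = x * (derivative f).eval x - w * f.eval x := by
    rw [hl', ← eval_gegenbauer, normalizedGegenbauer_contiguous hl]
    simp [hf]
  rw [Pmat, hgeg, hgeg₁, hgeg₂]
  ext a b
  fin_cases a <;> fin_cases b <;>
    simp only [jetMatrix, diagonal_mul, RingHom.mapMatrix_apply, map_apply, coe_evalRingHom,
      of_apply, cons_val', cons_val_fin_one, cons_val_zero, cons_val_one, Fin.zero_eta,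
      Fin.mk_one, eval_add, eval_mul, eval_C, eval_X] <;>
    field_simp <;>
    ring

lemma Pmat_mul_Wmat_mul_transpose_apply {i j : ℕ} (hpi : p + i ≠ 0) (hpj : p + j ≠ 0)
    (hqi : n - p + i ≠ 0) (hqj : n - p + j ≠ 0) (x : ℝ) (a b : Fin 2) :
    (Pmat n p i x * Wmat n p x * (Pmat n p j x)ᵀ) a b =
      ![1 / (p + i), 1 / (n - p + i)] a * ![1 / (p + j), 1 / (n - p + j)] b *
        ((1 - x ^ 2) ^ ((n : ℝ) / 2 - 1) *
          ((jetMatrix p (n - p) (normalizedGegenbauer ((n + 1) / 2) i) * weightFactor p (n - p) *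
            (jetMatrix p (n - p) (normalizedGegenbauer ((n + 1) / 2) j))ᵀ) a b).eval x) := by
  have hmap (A B D : Matrix (Fin 2) (Fin 2) ℝ[X]) :
      ((A * B * Dᵀ) a b).eval x = ((evalRingHom x).mapMatrix A * (evalRingHom x).mapMatrix B *
        ((evalRingHom x).mapMatrix D)ᵀ) a b := by
    simp [mul_apply]
  rw [Pmat_eq_diagonal_mul_map_jetMatrix hpi hqi, Pmat_eq_diagonal_mul_map_jetMatrix hpj hqj,
    Wmat_eq_smul_map_weightFactor, hmap, transpose_mul, diagonal_transpose, ← Matrix.mul_assoc,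
    mul_diagonal, Matrix.mul_smul, Matrix.smul_mul, Matrix.smul_apply,
    Matrix.mul_assoc (diagonal _), Matrix.mul_assoc (diagonal _), diagonal_mul, smul_eq_mul]
  ring

lemma ultrasphericalIntegral_normalizedGegenbauer_mul {l : ℝ} (hl : -1 / 2 < l) {i j : ℤ}
    (hij : i ≠ j) :
    ultrasphericalIntegral (l - 1 / 2) (normalizedGegenbauer l i * normalizedGegenbauer l j) =
      0 := by
  rw [normalizedGegenbauer, normalizedGegenbauer, mul_mul_mul_comm, ← C_mul,
    ultrasphericalIntegral_C_mul, ultrasphericalIntegral_gegenbauer_mul_gegenbauer hl hij,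
    mul_zero]

lemma ultrasphericalIntegral_derivative_normalizedGegenbauer_mul {l : ℝ} (hl : 0 < l) {i j : ℤ}
    (hij : i ≠ j) :
    ultrasphericalIntegral (l + 1 / 2)
      (derivative (normalizedGegenbauer l i) * derivative (normalizedGegenbauer l j)) = 0 := by
  rw [derivative_normalizedGegenbauer hl, derivative_normalizedGegenbauer hl,
    show l + 1 / 2 = l + 1 - 1 / 2 by ring]
  exact ultrasphericalIntegral_gegenbauer_mul_gegenbauer (by linarith) (sub_left_injective.ne hij)

theorem stmt_3_general (n : ℕ) (hn : 1 ≤ n) (p : ℝ) (i j : ℕ) (hij : i ≠ j)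
    (hpi : p + i ≠ 0) (hpj : p + j ≠ 0) (hqi : n - p + i ≠ 0) (hqj : n - p + j ≠ 0)
    (a b : Fin 2) :
    ∫ x in (-1 : ℝ)..1, (Pmat n p i x * Wmat n p x * (Pmat n p j x)ᵀ) a b = 0 := by
  have hs : -1 < (n : ℝ) / 2 - 1 := by
    have : (0 : ℝ) < n := by exact_mod_cast hn
    linarith
  have hl : (0 : ℝ) < (n + 1) / 2 := by positivity
  have hij' : (i : ℤ) ≠ j := by exact_mod_cast hij
  have hfg := ultrasphericalIntegral_normalizedGegenbauer_mul (hl.trans' (by norm_num)) hij'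
  have hfg' := ultrasphericalIntegral_derivative_normalizedGegenbauer_mul hl hij'
  rw [show ((n : ℝ) + 1) / 2 - 1 / 2 = n / 2 - 1 + 1 by ring] at hfg
  rw [show ((n : ℝ) + 1) / 2 + 1 / 2 = n / 2 - 1 + 1 + 1 by ring] at hfg'
  have hentry := ultrasphericalIntegral_jetMatrix_apply hs
    (show _ = p + (n - p) by ring) hfg hfg' a b
  simp only [Pmat_mul_Wmat_mul_transpose_apply hpi hpj hqi hqj,
    intervalIntegral.integral_const_mul]
  rw [← ultrasphericalIntegral, hentry, mul_zero]

end MatrixOrthogonality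

/-- Orthogonality: for `i ≠ j`, `∫_{-1}^{1} P_i(x) W_{p,n}(x) P_j(x)^T dx = 0`. -/
theorem stmt_3 (n : ℕ) (hn : 1 ≤ n) (p : ℝ) (hp : 0 < p) (hpn : p < n) :
    ∀ i j : ℕ, i ≠ j → ∀ a b : Fin 2,
      ∫ x in (-1 : ℝ)..1, (Pmat n p i x * Wmat n p x * (Pmat n p j x)ᵀ) a b = 0 := by
  intro i j hij
  have : 0 < n - p := sub_pos.2 hpn
  exact stmt_3_general n hn p i j hij (by positivity) (by positivity) (by positivity)
    (by positivity)
end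

section
/- Write M^{i,j}(p) for the blocks of M regarded as functions of the parameter p (with n, N, α fixed). Then for all 0 ≤ i, j ≤ N: M^{i,j}_{12}(p) = M^{i,j}_{21}(n-p) and M^{i,j}_{22}(p) = M^{i,j}_{11}(n-p). -/
open Matrix

/-- The normalizing matrix `S_w`: the (diagonal, positive definite) inverse square root
of `‖P_w‖² = ∫_{-1}^1 P_w W_{p,n} P_w^T dx`, given explicitly. -/
noncomputable def Smat (n : ℕ) (p : ℝ) (w : ℕ) : Matrix (Fin 2) (Fin 2) ℝ :=
  Real.sqrt (((w.factorial : ℝ) * ((n : ℝ) + 1) * ((n : ℝ) + 2 * w + 1) *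
        Real.Gamma ((n : ℝ) / 2 + 3 / 2)) /
      (Real.sqrt Real.pi * 2 ^ (w / 2) * Real.Gamma ((n : ℝ) / 2 + 1 + (w / 2 : ℕ)) *
        ∏ k ∈ Finset.range ((w + 1) / 2), ((n : ℝ) + 2 * k + 1))) •
    Matrix.diagonal ![Real.sqrt ((p + w) / (p * ((n : ℝ) - p + w + 1))),
      Real.sqrt (((n : ℝ) - p + w) / (((n : ℝ) - p) * (p + w + 1)))]

/-- The orthonormal matrix valued polynomials `Q_w = S_w P_w`. -/
noncomputable def Qmat (n : ℕ) (p : ℝ) (w : ℕ) (x : ℝ) : Matrix (Fin 2) (Fin 2) ℝ :=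
  Smat n p w * Pmat n p w x

/-- The `2 × 2` block `M^{i,j} = ∫_{-1}^α Q_i(x) W_{p,n}(x) Q_j(x)^T dx`. -/
noncomputable def Mblk (n : ℕ) (p α : ℝ) (i j : ℕ) : Matrix (Fin 2) (Fin 2) ℝ :=
  Matrix.of fun a b : Fin 2 =>
    ∫ x in (-1 : ℝ)..α, (Qmat n p i x * Wmat n p x * (Qmat n p j x)ᵀ) a b

/-- The full `2(N+1) × 2(N+1)` matrix `M`, with (1-based) entries
`M_{2i+1,2j+1} = M^{i,j}_{11}`, `M_{2i+1,2j+2} = M^{i,j}_{12}`,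
`M_{2i+2,2j+1} = M^{i,j}_{21}`, `M_{2i+2,2j+2} = M^{i,j}_{22}`. -/
noncomputable def Mfull (n : ℕ) (p α : ℝ) (N : ℕ) :
    Matrix (Fin (2 * (N + 1))) (Fin (2 * (N + 1))) ℝ :=
  Matrix.of fun r c =>
    Mblk n p α (r.val / 2) (c.val / 2) ⟨r.val % 2, by omega⟩ ⟨c.val % 2, by omega⟩

/-!
Conjugation by the exchange matrix `J = !![0, 1; 1, 0]` replaces `p` by `n - p` in the weight, in
`P_w` and in the normalization `S_w`. Since `J² = 1`, the factors `J` cancel inside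
`Q_i W Q_jᵀ`, so the blocks satisfy `M^{i,j}(n - p) = J M^{i,j}(p) J`. As `J` reverses
the order of rows and columns, `J A J` is `A.submatrix Fin.revPerm Fin.revPerm`.
-/

theorem submatrix_revPerm_fin_two {R : Type*} (a b c d : R) :
    (!![a, b; c, d]).submatrix Fin.revPerm Fin.revPerm = !![d, c; b, a] := by
  ext i j
  fin_cases i <;> fin_cases j <;> rfl

section ParameterReflection

variable (n : ℕ) (p : ℝ)

theorem Wmat_sub (x : ℝ) :
    Wmat n (n - p) x = (Wmat n p x).submatrix Fin.revPerm Fin.revPerm := by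
  have h_upper : (n - p) * x ^ 2 + n - (n - p) = (n - p) * x ^ 2 + p := by ring
  have h_lower : p * x ^ 2 + (n - p) = p * x ^ 2 + n - p := by ring
  simp only [Wmat, submatrix_smul, Pi.smul_apply, submatrix_revPerm_fin_two, sub_sub_self,
    h_upper, h_lower]

theorem Pmat_sub (w : ℕ) (x : ℝ) :
    Pmat n (n - p) w x = (Pmat n p w x).submatrix Fin.revPerm Fin.revPerm := by
  simp only [Pmat, submatrix_revPerm_fin_two, sub_sub_self]

theorem Smat_sub (w : ℕ) :
    Smat n (n - p) w = (Smat n p w).submatrix Fin.revPerm Fin.revPerm := by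
  simp only [Smat, submatrix_smul, Pi.smul_apply, diagonal_vec2,
    submatrix_revPerm_fin_two, sub_sub_self]

theorem Qmat_sub (w : ℕ) (x : ℝ) :
    Qmat n (n - p) w x = (Qmat n p w x).submatrix Fin.revPerm Fin.revPerm := by
  simp only [Qmat, Smat_sub, Pmat_sub, submatrix_mul_equiv]

theorem Mblk_sub (α : ℝ) (i j : ℕ) :
    Mblk n (n - p) α i j = (Mblk n p α i j).submatrix Fin.revPerm Fin.revPerm := by
  ext a b
  simp only [Mblk, Qmat_sub, Wmat_sub, transpose_submatrix, submatrix_mul_equiv, submatrix_apply,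
    of_apply]

end ParameterReflection

/-- Blocks of `M` for parameters `p` and `n - p`: `M^{i,j}_{12}(p) = M^{i,j}_{21}(n-p)`
and `M^{i,j}_{22}(p) = M^{i,j}_{11}(n-p)`. -/
theorem stmt_8 (n : ℕ) (hn : 1 ≤ n) (p : ℝ) (hp : 0 < p) (hpn : p < n)
    (N : ℕ) (α : ℝ) (hα : α ∈ Set.Ioo (-1 : ℝ) 1) :
    ∀ i j : ℕ, i ≤ N → j ≤ N →
      Mblk n p α i j 0 1 = Mblk n ((n : ℝ) - p) α i j 1 0 ∧
      Mblk n p α i j 1 1 = Mblk n ((n : ℝ) - p) α i j 0 0 := by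
  intro i j _ _
  rw [Mblk_sub]
  exact ⟨rfl, rfl⟩
end
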